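/- For all u, v ∈ V_p, the bilinear form L(u,v) := B(u, P v) satisfies the identity L(u,v) = ∫_{−1}^{1} ((I u)'(s), (I v)'(s))_{MA⁻¹M} ds + (τ²/4) ∫_{−1}^{1} (u(s), v(s))_A ds + (τ/2)(u(1), v(1))_M + (τ/2)(u(−1), v(−1))_M. In particular, L is a symmetric positive definite bilinear form on V_p. -/

import Mathlib

open Matrix Polynomial

/-- The `k`-th Legendre polynomial (Rodrigues' formula), normalized so that `L_k(1) = 1`. -/
noncomputable def legendre (k : ℕ) : Polynomial ℝ :=
  ((2 ^ k * (Nat.factorial k) : ℝ))⁻¹ •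
    ((fun q => Polynomial.derivative q)^[k] ((Polynomial.X ^ 2 - 1) ^ k))

/-- Evaluation at `s` of the `ℝⁿ`-valued polynomial with coefficients `c` (degree ≤ p). -/
noncomputable def pev {n p : ℕ} (c : Fin (p + 1) → Fin n → ℝ) (s : ℝ) : Fin n → ℝ :=
  ∑ j : Fin (p + 1), s ^ (j : ℕ) • c j

/-- Evaluation at `s` of the derivative of the `ℝⁿ`-valued polynomial with coefficients `c`. -/
noncomputable def pdev {n p : ℕ} (c : Fin (p + 1) → Fin n → ℝ) (s : ℝ) : Fin n → ℝ :=
  ∑ j : Fin (p + 1), ((((j : ℕ) : ℝ)) * s ^ ((j : ℕ) - 1)) • c j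

/-- Evaluation at `s` of `(I v)'`, the derivative of the reconstruction `I v` of the
`ℝⁿ`-valued polynomial `v` with coefficients `c`, where the reconstruction operator
`I v := v − v(−1)·(−1)^p (L_p − L_{p+1})/2` acts coefficientwise. -/
noncomputable def reconD {n p : ℕ} (c : Fin (p + 1) → Fin n → ℝ) (s : ℝ) : Fin n → ℝ :=
  pdev c s -
    ((-1 : ℝ) ^ p * (Polynomial.derivative (legendre p - legendre (p + 1))).eval s / 2) •
      pev c (-1)

/-- The DG bilinear form `B(u, ·)` applied to a test function `g : ℝ → ℝⁿ`:
`B(u,g) = ∫_{−1}^{1} (u'(s), g(s))_M ds + (u(−1), g(−1))_M + (τ/2) ∫_{−1}^{1} (u(s), g(s))_A ds`,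
where `(u,v)_M := vᵀ M u`. -/
noncomputable def Bform {n p : ℕ} (M A : Matrix (Fin n) (Fin n) ℝ) (τ : ℝ)
    (c : Fin (p + 1) → Fin n → ℝ) (g : ℝ → Fin n → ℝ) : ℝ :=
  (∫ s in (-1 : ℝ)..1, g s ⬝ᵥ (M *ᵥ pdev c s)) + g (-1) ⬝ᵥ (M *ᵥ pev c (-1)) +
    (τ / 2) * ∫ s in (-1 : ℝ)..1, g s ⬝ᵥ (A *ᵥ pev c s)

/-- The operator `P v := A⁻¹ M (I v)' + (τ/2) v`, evaluated at `s`. -/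
noncomputable def Pop {n p : ℕ} (M A : Matrix (Fin n) (Fin n) ℝ) (τ : ℝ)
    (c : Fin (p + 1) → Fin n → ℝ) (s : ℝ) : Fin n → ℝ :=
  (A⁻¹ * M) *ᵥ reconD c s + (τ / 2) • pev c s

/-- The lifting polynomial `(-1)^p (L_p - L_{p+1})/2`. -/
noncomputable def liftPoly (p : ℕ) : Polynomial ℝ :=
  C ((-1 : ℝ) ^ p / 2) * (legendre p - legendre (p + 1))

/-- The `i`-th component of the vector polynomial, as a Mathlib polynomial. -/
noncomputable def compPoly {n p : ℕ} (c : Fin (p + 1) → Fin n → ℝ) (i : Fin n) : Polynomial ℝ :=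
  ∑ j : Fin (p + 1), C (c j i) * X ^ (j : ℕ)

lemma poly_intervalIntegrable (q : Polynomial ℝ) (a b : ℝ) :
    IntervalIntegrable (fun s => q.eval s) MeasureTheory.volume a b :=
  q.continuous.intervalIntegrable a b

lemma poly_ftc (q : Polynomial ℝ) :
    ∫ s in (-1 : ℝ)..1, (derivative q).eval s = q.eval 1 - q.eval (-1) :=
  intervalIntegral.integral_eq_sub_of_hasDerivAt (fun x _ => q.hasDerivAt x)
    (poly_intervalIntegrable _ _ _)

lemma poly_parts (w q : Polynomial ℝ) :
    ∫ s in (-1 : ℝ)..1, (derivative w * q).eval s =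
      w.eval 1 * q.eval 1 - w.eval (-1) * q.eval (-1)
        - ∫ s in (-1 : ℝ)..1, (w * derivative q).eval s := by
  have h := poly_ftc (w * q)
  rw [derivative_mul] at h
  simp only [eval_add] at h
  rw [intervalIntegral.integral_add (poly_intervalIntegrable _ _ _)
    (poly_intervalIntegrable _ _ _)] at h
  simp only [eval_mul] at h ⊢
  linarith

lemma sq_factor_one (k : ℕ) : ((X ^ 2 - 1 : ℝ[X]) ^ k).map (algebraMap ℝ ℝ)
    = (X - C 1) ^ k * (X + 1) ^ k := by
  rw [← mul_pow]; simp only [Algebra.algebraMap_self, Polynomial.map_id, map_one]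
  congr 1; ring

lemma sq_factor_neg_one (k : ℕ) : ((X ^ 2 - 1 : ℝ[X]) ^ k).map (algebraMap ℝ ℝ)
    = (X - C (-1)) ^ k * (X - 1) ^ k := by
  rw [← mul_pow]; simp only [Algebra.algebraMap_self, Polynomial.map_id, map_one, map_neg]
  congr 1; ring

lemma legendre_eval_one (k : ℕ) : (legendre k).eval 1 = 1 := by
  have h := aeval_iterate_derivative_self ((X ^ 2 - 1 : ℝ[X]) ^ k) k (1 : ℝ) (sq_factor_one k)
  rw [Polynomial.coe_aeval_eq_eval] at h
  unfold legendre
  rw [eval_smul]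
  erw [h]
  have : (Nat.factorial k : ℝ) ≠ 0 := by positivity
  simp only [eval_pow, eval_add, eval_X, eval_one, nsmul_eq_mul, smul_eq_mul]
  norm_num
  field_simp

lemma legendre_eval_neg_one (k : ℕ) : (legendre k).eval (-1) = (-1) ^ k := by
  have h := aeval_iterate_derivative_self ((X ^ 2 - 1 : ℝ[X]) ^ k) k (-1 : ℝ)
    (sq_factor_neg_one k)
  rw [Polynomial.coe_aeval_eq_eval] at h
  unfold legendre
  rw [eval_smul]
  erw [h]
  have : (Nat.factorial k : ℝ) ≠ 0 := by positivity
  simp only [eval_pow, eval_sub, eval_X, eval_one, nsmul_eq_mul, smul_eq_mul]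
  have e : ((-1 : ℝ) - 1) ^ k = (-1) ^ k * 2 ^ k := by rw [← mul_pow]; norm_num
  rw [e]
  field_simp

lemma legendre_natDegree_le (k : ℕ) : (legendre k).natDegree ≤ k := by
  unfold legendre
  refine (natDegree_smul_le _ _).trans ?_
  refine (natDegree_iterate_derivative _ k).trans ?_
  have : ((X ^ 2 - 1 : ℝ[X]) ^ k).natDegree ≤ k * 2 := by
    refine natDegree_pow_le.trans (Nat.mul_le_mul_left _ ?_)
    compute_degree
  omega

lemma rodrigues_orth (k m : ℕ) (hm : m ≤ k) (q : Polynomial ℝ) (hq : q.degree < (m : WithBot ℕ)) :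
    ∫ s in (-1 : ℝ)..1, (derivative^[m] ((X ^ 2 - 1 : ℝ[X]) ^ k) * q).eval s = 0 := by
  induction m generalizing q with
  | zero =>
    have : q = 0 := by
      rw [← degree_eq_bot]
      simpa [Nat.WithBot.lt_zero_iff] using hq
    simp [this]
  | succ m ih =>
    have h1 := aeval_iterate_derivative_of_lt ((X ^ 2 - 1 : ℝ[X]) ^ k) k (1 : ℝ)
      (sq_factor_one k) (show m < k by omega)
    have h2 := aeval_iterate_derivative_of_lt ((X ^ 2 - 1 : ℝ[X]) ^ k) k (-1 : ℝ)
      (sq_factor_neg_one k) (show m < k by omega)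
    rw [Polynomial.coe_aeval_eq_eval] at h1 h2
    rw [Function.iterate_succ_apply', poly_parts, h1, h2, ih (by omega)]
    · simp
    · by_cases h0 : q = 0
      · simp [h0]
      · have h3 := degree_derivative_lt h0
        rw [degree_eq_natDegree h0] at h3 hq
        refine lt_of_lt_of_le h3 ?_
        have : q.natDegree < m + 1 := by exact_mod_cast hq
        exact_mod_cast Nat.lt_succ_iff.mp this

lemma legendre_orth (k : ℕ) (q : Polynomial ℝ) (hq : q.degree < (k : WithBot ℕ)) :
    ∫ s in (-1 : ℝ)..1, (legendre k * q).eval s = 0 := by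
  have h := rodrigues_orth k k le_rfl q hq
  unfold legendre
  simp only [smul_mul_assoc, eval_smul, smul_eq_mul, intervalIntegral.integral_const_mul]
  erw [h]
  simp

lemma lift_orth (p : ℕ) (q : Polynomial ℝ) (hq : q.degree < (p : WithBot ℕ)) :
    ∫ s in (-1 : ℝ)..1, (liftPoly p * q).eval s = 0 := by
  have h1 := legendre_orth p q hq
  have h2 := legendre_orth (p + 1) q (hq.trans (by exact_mod_cast Nat.lt_succ_self p))
  have e : ∀ s, (liftPoly p * q).eval s =
      ((-1 : ℝ) ^ p / 2) * ((legendre p * q).eval s - (legendre (p + 1) * q).eval s) := by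
    intro s; simp only [liftPoly, eval_mul, eval_C, eval_sub]; ring
  simp only [e]
  rw [intervalIntegral.integral_const_mul, intervalIntegral.integral_sub
    (poly_intervalIntegrable _ _ _) (poly_intervalIntegrable _ _ _), h1, h2]
  simp

lemma lift_eval_one (p : ℕ) : (liftPoly p).eval 1 = 0 := by
  simp [liftPoly, legendre_eval_one]

lemma lift_eval_neg_one (p : ℕ) : (liftPoly p).eval (-1) = 1 := by
  simp only [liftPoly, eval_mul, eval_C, eval_sub, legendre_eval_neg_one]
  have : ((-1 : ℝ) ^ p) * (-1) ^ p = 1 := by rw [← mul_pow]; norm_num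
  rw [pow_succ]; linarith

lemma degree_deriv_lt (p : ℕ) (q : Polynomial ℝ) (hq : q.natDegree ≤ p) :
    (derivative q).degree < (p : WithBot ℕ) := by
  by_cases h0 : q = 0
  · simp [h0]
  · refine lt_of_lt_of_le (degree_derivative_lt h0) ?_
    rw [degree_eq_natDegree h0]; exact_mod_cast hq

/-- `∫ φ' q = -q(-1)` for `q` of degree at most `p`. -/
lemma lift_key (p : ℕ) (q : Polynomial ℝ) (hq : q.natDegree ≤ p) :
    ∫ s in (-1 : ℝ)..1, (derivative (liftPoly p)).eval s * q.eval s = - q.eval (-1) := by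
  have h := poly_parts (liftPoly p) q
  rw [lift_orth p _ (degree_deriv_lt p q hq), lift_eval_one, lift_eval_neg_one] at h
  simp only [eval_mul] at h
  rw [h]; ring

lemma lift_deriv_natDegree (p : ℕ) : (derivative (liftPoly p)).natDegree ≤ p := by
  have h1 : (liftPoly p).natDegree ≤ p + 1 := by
    unfold liftPoly
    refine (natDegree_C_mul_le _ _).trans ((natDegree_sub_le _ _).trans ?_)
    have := legendre_natDegree_le p
    have := legendre_natDegree_le (p + 1)
    exact max_le (by omega) (by omega)
  have := natDegree_derivative_le (liftPoly p)
  omega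

lemma compPoly_natDegree {n p : ℕ} (c : Fin (p + 1) → Fin n → ℝ) (i : Fin n) :
    (compPoly c i).natDegree ≤ p := by
  unfold compPoly
  refine natDegree_sum_le_of_forall_le _ _ (fun j _ => ?_)
  exact (natDegree_C_mul_X_pow_le _ _).trans (by omega)

lemma pev_apply {n p : ℕ} (c : Fin (p + 1) → Fin n → ℝ) (s : ℝ) (i : Fin n) :
    pev c s i = (compPoly c i).eval s := by
  simp only [pev, compPoly, eval_finsetSum, Finset.sum_apply, Pi.smul_apply,
    smul_eq_mul, eval_mul, eval_C, eval_pow, eval_X]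
  exact Finset.sum_congr rfl fun j _ => by ring

lemma pdev_apply {n p : ℕ} (c : Fin (p + 1) → Fin n → ℝ) (s : ℝ) (i : Fin n) :
    pdev c s i = (derivative (compPoly c i)).eval s := by
  simp only [pdev, compPoly, derivative_sum, eval_finsetSum, Finset.sum_apply, Pi.smul_apply,
    smul_eq_mul, derivative_C_mul_X_pow, eval_mul, eval_C, eval_pow, eval_X]
  exact Finset.sum_congr rfl fun j _ => by ring

lemma reconD_eq {n p : ℕ} (c : Fin (p + 1) → Fin n → ℝ) (s : ℝ) :
    reconD c s = pdev c s - (derivative (liftPoly p)).eval s • pev c (-1) := by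
  unfold reconD liftPoly
  congr 2
  simp only [derivative_mul, derivative_C, zero_mul, zero_add, eval_mul, eval_C]
  ring

/-- `g` is (pointwise) a vector-valued polynomial of degree at most `p`. -/
def IsVecPoly {n : ℕ} (p : ℕ) (g : ℝ → Fin n → ℝ) : Prop :=
  ∃ G : Fin n → Polynomial ℝ, (∀ i, (G i).natDegree ≤ p) ∧ ∀ s i, g s i = (G i).eval s

lemma IsVecPoly.continuous {n p : ℕ} {g : ℝ → Fin n → ℝ} (hg : IsVecPoly p g) :
    Continuous g := by
  obtain ⟨G, -, h⟩ := hg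
  refine continuous_pi fun i => ?_
  simp only [h]
  exact (G i).continuous

lemma IsVecPoly.add {n p : ℕ} {g h : ℝ → Fin n → ℝ} (hg : IsVecPoly p g) (hh : IsVecPoly p h) :
    IsVecPoly p (fun s => g s + h s) := by
  obtain ⟨G, hG, eG⟩ := hg
  obtain ⟨H, hH, eH⟩ := hh
  exact ⟨fun i => G i + H i, fun i => (natDegree_add_le _ _).trans (max_le (hG i) (hH i)),
    fun s i => by simp [eG, eH]⟩

lemma IsVecPoly.mulVec {n p : ℕ} {g : ℝ → Fin n → ℝ} (hg : IsVecPoly p g)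
    (N : Matrix (Fin n) (Fin n) ℝ) : IsVecPoly p (fun s => N *ᵥ g s) := by
  obtain ⟨G, hG, eG⟩ := hg
  refine ⟨fun i => ∑ j, C (N i j) * G j, fun i => ?_, fun s i => ?_⟩
  · exact natDegree_sum_le_of_forall_le _ _ fun j _ => (natDegree_C_mul_le _ _).trans (hG j)
  · simp [Matrix.mulVec, dotProduct, eval_finsetSum, eG]

lemma IsVecPoly.smul {n p : ℕ} {g : ℝ → Fin n → ℝ} (hg : IsVecPoly p g) (a : ℝ) :
    IsVecPoly p (fun s => a • g s) := by
  obtain ⟨G, hG, eG⟩ := hg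
  exact ⟨fun i => C a * G i, fun i => (natDegree_C_mul_le _ _).trans (hG i),
    fun s i => by simp [eG]⟩

lemma isVecPoly_pev {n p : ℕ} (c : Fin (p + 1) → Fin n → ℝ) : IsVecPoly p (pev c) :=
  ⟨compPoly c, compPoly_natDegree c, pev_apply c⟩

lemma isVecPoly_pdev {n p : ℕ} (c : Fin (p + 1) → Fin n → ℝ) : IsVecPoly p (pdev c) :=
  ⟨fun i => derivative (compPoly c i), fun i => by
    have := compPoly_natDegree c i
    have := natDegree_derivative_le (compPoly c i)
    show (derivative (compPoly c i)).natDegree ≤ p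
    omega, pdev_apply c⟩

lemma isVecPoly_reconD {n p : ℕ} (c : Fin (p + 1) → Fin n → ℝ) : IsVecPoly p (reconD c) := by
  obtain ⟨G, hG, eG⟩ := isVecPoly_pdev c
  refine ⟨fun i => G i - C (pev c (-1) i) * derivative (liftPoly p), fun i => ?_, fun s i => ?_⟩
  · exact (natDegree_sub_le _ _).trans (max_le (hG i)
      ((natDegree_C_mul_le _ _).trans (lift_deriv_natDegree p)))
  · rw [reconD_eq]; simp [eG, mul_comm]

lemma isVecPoly_Pop {n p : ℕ} (M A : Matrix (Fin n) (Fin n) ℝ) (τ : ℝ)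
    (c : Fin (p + 1) → Fin n → ℝ) : IsVecPoly p (Pop M A τ c) :=
  ((isVecPoly_reconD c).mulVec _).add ((isVecPoly_pev c).smul _)

lemma bil_continuous {n p : ℕ} {g h : ℝ → Fin n → ℝ} (hg : IsVecPoly p g) (hh : IsVecPoly p h)
    (N : Matrix (Fin n) (Fin n) ℝ) : Continuous (fun s => g s ⬝ᵥ (N *ᵥ h s)) :=
  hg.continuous.dotProduct (hh.mulVec N).continuous

lemma bil_int {n p : ℕ} {g h : ℝ → Fin n → ℝ} (hg : IsVecPoly p g) (hh : IsVecPoly p h)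
    (N : Matrix (Fin n) (Fin n) ℝ) :
    IntervalIntegrable (fun s => g s ⬝ᵥ (N *ᵥ h s)) MeasureTheory.volume (-1) 1 :=
  (bil_continuous hg hh N).intervalIntegrable _ _

/-- Defining property of the reconstruction. -/
lemma recon_key {n p : ℕ} {g : ℝ → Fin n → ℝ} (hg : IsVecPoly p g)
    (N : Matrix (Fin n) (Fin n) ℝ) (c : Fin (p + 1) → Fin n → ℝ) :
    ∫ s in (-1 : ℝ)..1, g s ⬝ᵥ (N *ᵥ reconD c s) =
      (∫ s in (-1 : ℝ)..1, g s ⬝ᵥ (N *ᵥ pdev c s)) + g (-1) ⬝ᵥ (N *ᵥ pev c (-1)) := by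
  obtain ⟨G, hG, eG⟩ := id hg
  set q : Polynomial ℝ := ∑ i, C ((N *ᵥ pev c (-1)) i) * G i with hq
  have hqd : q.natDegree ≤ p :=
    natDegree_sum_le_of_forall_le _ _ fun j _ => (natDegree_C_mul_le _ _).trans (hG j)
  have hqe : ∀ s, g s ⬝ᵥ (N *ᵥ pev c (-1)) = q.eval s := by
    intro s
    simp [hq, dotProduct, eval_finsetSum, eG, mul_comm]
  have e : ∀ s, g s ⬝ᵥ (N *ᵥ reconD c s) = g s ⬝ᵥ (N *ᵥ pdev c s) -
      (derivative (liftPoly p)).eval s * q.eval s := by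
    intro s
    rw [reconD_eq, mulVec_sub, dotProduct_sub, mulVec_smul, dotProduct_smul, hqe, smul_eq_mul]
  simp only [e]
  rw [intervalIntegral.integral_sub (bil_int hg (isVecPoly_pdev c) N)
    (Continuous.intervalIntegrable (by fun_prop) _ _),
    lift_key p q hqd, hqe]
  ring

lemma bil_symm {n : ℕ} {N : Matrix (Fin n) (Fin n) ℝ} (hN : N.PosDef) (x y : Fin n → ℝ) :
    x ⬝ᵥ (N *ᵥ y) = y ⬝ᵥ (N *ᵥ x) := by
  have h : Nᵀ = N := by simpa [Matrix.IsHermitian] using hN.1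
  rw [dotProduct_mulVec, dotProduct_comm, ← mulVec_transpose, h]

lemma pev_parts {n p : ℕ} (N : Matrix (Fin n) (Fin n) ℝ) (c d : Fin (p + 1) → Fin n → ℝ) :
    (∫ s in (-1 : ℝ)..1, pdev d s ⬝ᵥ (N *ᵥ pev c s)) +
      (∫ s in (-1 : ℝ)..1, pev d s ⬝ᵥ (N *ᵥ pdev c s)) =
      pev d 1 ⬝ᵥ (N *ᵥ pev c 1) - pev d (-1) ⬝ᵥ (N *ᵥ pev c (-1)) := by
  rw [← intervalIntegral.integral_add (bil_int (isVecPoly_pdev d) (isVecPoly_pev c) N)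
    (bil_int (isVecPoly_pev d) (isVecPoly_pdev c) N)]
  set Q : Polynomial ℝ := ∑ i, compPoly d i * ∑ j, C (N i j) * compPoly c j with hQ
  have e1 : ∀ s, pev d s ⬝ᵥ (N *ᵥ pev c s) = Q.eval s := by
    intro s
    simp [hQ, dotProduct, Matrix.mulVec, eval_finsetSum, pev_apply]
  have e2 : ∀ s, pdev d s ⬝ᵥ (N *ᵥ pev c s) + pev d s ⬝ᵥ (N *ᵥ pdev c s)
      = (derivative Q).eval s := by
    intro s
    simp [hQ, dotProduct, Matrix.mulVec, eval_finsetSum, pev_apply, pdev_apply,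
      Finset.sum_add_distrib]
  simp only [e1, e2]
  exact poly_ftc Q

lemma L_identity {n p : ℕ} (M A : Matrix (Fin n) (Fin n) ℝ)
    (hM : M.PosDef) (hA : A.PosDef) (τ : ℝ) (c d : Fin (p + 1) → Fin n → ℝ) :
      Bform M A τ c (fun s => Pop M A τ d s)
        = (∫ s in (-1 : ℝ)..1, reconD d s ⬝ᵥ ((M * A⁻¹ * M) *ᵥ reconD c s)) +
          (τ ^ 2 / 4) * (∫ s in (-1 : ℝ)..1, pev d s ⬝ᵥ (A *ᵥ pev c s)) +
          (τ / 2) * (pev d 1 ⬝ᵥ (M *ᵥ pev c 1)) +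
          (τ / 2) * (pev d (-1) ⬝ᵥ (M *ᵥ pev c (-1))) := by
  have hMt : Mᵀ = M := by simpa [Matrix.IsHermitian] using hM.1
  have hAit : (A⁻¹)ᵀ = A⁻¹ := by simpa [Matrix.IsHermitian] using hA.inv.1
  have hdet : IsUnit A.det := (Matrix.isUnit_iff_isUnit_det _).1 hA.isUnit
  unfold Bform
  rw [← recon_key (isVecPoly_Pop M A τ d) M c]
  have move : ∀ (x y : Fin n → ℝ) (N : Matrix (Fin n) (Fin n) ℝ),
      ((A⁻¹ * M) *ᵥ x) ⬝ᵥ (N *ᵥ y) = x ⬝ᵥ ((M * A⁻¹ * N) *ᵥ y) := by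
    intro x y N
    rw [← mulVec_mulVec y (M * A⁻¹) N, dotProduct_mulVec x (M * A⁻¹), ← mulVec_transpose,
      transpose_mul, hMt, hAit]
  have e1 : ∀ s, Pop M A τ d s ⬝ᵥ (M *ᵥ reconD c s) =
      reconD d s ⬝ᵥ ((M * A⁻¹ * M) *ᵥ reconD c s) + (τ / 2) * (pev d s ⬝ᵥ (M *ᵥ reconD c s)) := by
    intro s
    rw [Pop, add_dotProduct, smul_dotProduct, move, smul_eq_mul]
  have e2 : ∀ s, Pop M A τ d s ⬝ᵥ (A *ᵥ pev c s) =
      pev c s ⬝ᵥ (M *ᵥ reconD d s) + (τ / 2) * (pev d s ⬝ᵥ (A *ᵥ pev c s)) := by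
    intro s
    rw [Pop, add_dotProduct, smul_dotProduct, move, smul_eq_mul, Matrix.mul_assoc,
      Matrix.nonsing_inv_mul _ hdet, Matrix.mul_one, bil_symm hM]
  simp only [e1, e2]
  rw [intervalIntegral.integral_add (bil_int (isVecPoly_reconD d) (isVecPoly_reconD c) _)
      ((bil_int (isVecPoly_pev d) (isVecPoly_reconD c) M).const_mul _),
    intervalIntegral.integral_add (bil_int (isVecPoly_pev c) (isVecPoly_reconD d) _)
      ((bil_int (isVecPoly_pev d) (isVecPoly_pev c) A).const_mul _),
    intervalIntegral.integral_const_mul, intervalIntegral.integral_const_mul,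
    recon_key (isVecPoly_pev d) M c, recon_key (isVecPoly_pev c) M d]
  have hp := pev_parts M c d
  simp only [bil_symm hM (pdev d _) (pev c _)] at hp
  rw [bil_symm hM (pev c (-1)) (pev d (-1))]
  linear_combination (τ / 2) * hp

/-- **Theorem (identity for the left-preconditioned form).** For all `u, v ∈ V_p`, the
bilinear form `L(u,v) := B(u, P v)` satisfies
`L(u,v) = ∫_{−1}^{1} ((I u)', (I v)')_{MA⁻¹M} ds + (τ²/4) ∫_{−1}^{1} (u, v)_A ds
+ (τ/2)(u(1), v(1))_M + (τ/2)(u(−1), v(−1))_M`, where `(u,v)_{MA⁻¹M} := vᵀ M A⁻¹ M u`.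
In particular, `L` is a symmetric positive definite bilinear form on `V_p`. -/
theorem Lform_identity {n p : ℕ} (M A : Matrix (Fin n) (Fin n) ℝ)
    (hM : M.PosDef) (hA : A.PosDef) (τ : ℝ) (hτ : 0 < τ) :
    (∀ c d : Fin (p + 1) → Fin n → ℝ,
      Bform M A τ c (fun s => Pop M A τ d s)
        = (∫ s in (-1 : ℝ)..1, reconD d s ⬝ᵥ ((M * A⁻¹ * M) *ᵥ reconD c s)) +
          (τ ^ 2 / 4) * (∫ s in (-1 : ℝ)..1, pev d s ⬝ᵥ (A *ᵥ pev c s)) +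
          (τ / 2) * (pev d 1 ⬝ᵥ (M *ᵥ pev c 1)) +
          (τ / 2) * (pev d (-1) ⬝ᵥ (M *ᵥ pev c (-1)))) ∧
    (∀ c d : Fin (p + 1) → Fin n → ℝ,
      Bform M A τ c (fun s => Pop M A τ d s) = Bform M A τ d (fun s => Pop M A τ c s)) ∧
    (∀ c : Fin (p + 1) → Fin n → ℝ, c ≠ 0 →
      0 < Bform M A τ c (fun s => Pop M A τ c s)) := by
  have key := L_identity (p := p) M A hM hA τ
  have hMt : Mᵀ = M := by simpa [Matrix.IsHermitian] using hM.1
  have hK : (M * A⁻¹ * M).PosDef := by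
    have h := hA.inv.conjTranspose_mul_mul_same
      (B := M) (Matrix.mulVec_injective_iff_isUnit.2 hM.isUnit)
    rwa [conjTranspose_eq_transpose_of_trivial, hMt] at h
  have nonneg : ∀ {N : Matrix (Fin n) (Fin n) ℝ}, N.PosDef → ∀ x, 0 ≤ x ⬝ᵥ (N *ᵥ x) := by
    intro N hN x
    simpa using hN.posSemidef.dotProduct_mulVec_nonneg x
  refine ⟨key, fun c d => ?_, fun c hc => ?_⟩
  · rw [key c d, key d c]
    simp only [bil_symm hK (reconD d _), bil_symm hA (pev d _), bil_symm hM (pev d _)]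
  · rw [key c c]
    have h1 : 0 ≤ ∫ s in (-1 : ℝ)..1, reconD c s ⬝ᵥ ((M * A⁻¹ * M) *ᵥ reconD c s) :=
      intervalIntegral.integral_nonneg (by norm_num) fun s _ => nonneg hK _
    have h2 : 0 < ∫ s in (-1 : ℝ)..1, pev c s ⬝ᵥ (A *ᵥ pev c s) := by
      refine intervalIntegral.integral_pos (by norm_num)
        (bil_continuous (isVecPoly_pev c) (isVecPoly_pev c) A).continuousOn
        (fun s _ => nonneg hA _) ?_
      have : ∃ s ∈ Set.Icc (-1 : ℝ) 1, pev c s ≠ 0 := by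
        by_contra! hcon
        apply hc
        funext j i
        have hz : compPoly c i = 0 := by
          refine Polynomial.eq_zero_of_infinite_isRoot _
            ((Set.Icc_infinite (show (-1 : ℝ) < 1 by norm_num)).mono fun s hs => ?_)
          have := congrFun (hcon s hs) i
          rwa [pev_apply] at this
        have hcoef : (compPoly c i).coeff (j : ℕ) = c j i := by
          simp [compPoly, coeff_X_pow, Fin.val_inj]
        rw [← hcoef, hz]; simp
      obtain ⟨s, hs, hne⟩ := this
      exact ⟨s, hs, by simpa using hA.dotProduct_mulVec_pos hne⟩
    have h3 := nonneg hM (pev c 1)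
    have h4 := nonneg hM (pev c (-1))
    have h5 : 0 < (τ ^ 2 / 4) * ∫ s in (-1 : ℝ)..1, pev c s ⬝ᵥ (A *ᵥ pev c s) := by positivity
    have h6 : 0 ≤ (τ / 2) * (pev c 1 ⬝ᵥ (M *ᵥ pev c 1)) := by positivity
    have h7 : 0 ≤ (τ / 2) * (pev c (-1) ⬝ᵥ (M *ᵥ pev c (-1))) := by positivity
    linarith
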